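/- Every finitely generated free abelian group Λ equipped with an involution σ decomposes as a direct sum of Z/2-submodules, each isomorphic to one of three indecomposable types: the trivial module Z (σ = id), the sign module Z₋ (σ = -id), or the regular module R = Z² with σ(x,y) = (y,x). -/

import Mathlib

/-- From a triangular normal form to the direct sum decomposition. -/
theorem core_aux {Λ : Type*} [AddCommGroup Λ] (σ : Λ →+ Λ)
    {N R κ : Type} [Finite N] [Finite R] [Finite κ] (a : N → ℤ)
    (e0 : Λ ≃+ (N ⊕ R → ℤ) × (κ → ℤ) × (N → ℤ))
    (h1 : ∀ x i, (e0 (σ x)).1 (Sum.inl i) = (e0 x).1 (Sum.inl i) + a i * (e0 x).2.2 i)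
    (h2 : ∀ x j, (e0 (σ x)).1 (Sum.inr j) = (e0 x).1 (Sum.inr j))
    (h3 : ∀ x j, (e0 (σ x)).2.1 j = - (e0 x).2.1 j)
    (h4 : ∀ x i, (e0 (σ x)).2.2 i = - (e0 x).2.2 i) :
    ∃ (t c r : ℕ) (e : Λ ≃+ ((Fin t → ℤ) × (Fin c → ℤ) × (Fin r → ℤ × ℤ))),
      ∀ x : Λ, e (σ x) = ((e x).1, -(e x).2.1, fun i => ((e x).2.2 i).swap) := by
  classical
  let E := {i : N // a i % 2 = 0}
  let O := {i : N // ¬ a i % 2 = 0}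
  obtain ⟨t, ⟨et⟩⟩ := Finite.exists_equiv_fin (R ⊕ E)
  obtain ⟨c, ⟨ec⟩⟩ := Finite.exists_equiv_fin (κ ⊕ E)
  obtain ⟨r, ⟨er⟩⟩ := Finite.exists_equiv_fin O
  let e1 : ((N ⊕ R → ℤ) × (κ → ℤ) × (N → ℤ)) ≃+
      ((R ⊕ E → ℤ) × (κ ⊕ E → ℤ) × (O → ℤ × ℤ)) :=
    { toFun := fun v =>
        (Sum.elim (fun j => v.1 (Sum.inr j))
            (fun i => v.1 (Sum.inl i.1) + (a i.1 / 2) * v.2.2 i.1),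
         Sum.elim v.2.1 (fun i => v.2.2 i.1),
         fun i => (v.2.2 i.1 + (v.1 (Sum.inl i.1) + (a i.1 / 2) * v.2.2 i.1),
            v.1 (Sum.inl i.1) + (a i.1 / 2) * v.2.2 i.1))
      invFun := fun w =>
        (Sum.elim (fun i => if h : a i % 2 = 0 then
              w.1 (Sum.inr ⟨i, h⟩) - (a i / 2) * w.2.1 (Sum.inr ⟨i, h⟩)
            else (w.2.2 ⟨i, h⟩).2 - (a i / 2) * ((w.2.2 ⟨i, h⟩).1 - (w.2.2 ⟨i, h⟩).2))
            (fun j => w.1 (Sum.inl j)),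
         fun j => w.2.1 (Sum.inl j),
         fun i => if h : a i % 2 = 0 then w.2.1 (Sum.inr ⟨i, h⟩)
            else (w.2.2 ⟨i, h⟩).1 - (w.2.2 ⟨i, h⟩).2)
      left_inv := by
        rintro ⟨k, z, x⟩
        refine Prod.ext ?_ (Prod.ext ?_ ?_)
        · funext j
          rcases j with i | j
          · by_cases h : a i % 2 = 0 <;> simp [h]
          · simp
        · funext j; simp
        · funext i
          by_cases h : a i % 2 = 0 <;> simp [h]
      right_inv := by
        rintro ⟨p, q, v⟩
        refine Prod.ext ?_ (Prod.ext ?_ ?_)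
        · funext j
          rcases j with j | ⟨i, h⟩
          · simp
          · simp only [Sum.elim_inl, Sum.elim_inr, dif_pos h]
            ring
        · funext j
          rcases j with j | ⟨i, h⟩
          · simp
          · simp [h]
        · funext i
          obtain ⟨i, h⟩ := i
          simp only [Sum.elim_inl, dif_neg h]
          refine Prod.ext ?_ ?_
          · ring
          · ring
      map_add' := by
        intro v w
        refine Prod.ext ?_ (Prod.ext ?_ ?_)
        · funext j
          rcases j with j | i
          · simp
          · simp; ring
        · funext j
          rcases j with j | i <;> simp
        · funext i
          refine Prod.ext ?_ ?_
          · simp; ring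
          · simp; ring }
  let e2 : ((R ⊕ E → ℤ) × (κ ⊕ E → ℤ) × (O → ℤ × ℤ)) ≃+
      ((Fin t → ℤ) × (Fin c → ℤ) × (Fin r → ℤ × ℤ)) :=
    { toFun := fun v => (fun j => v.1 (et.symm j), fun j => v.2.1 (ec.symm j),
        fun j => v.2.2 (er.symm j))
      invFun := fun v => (fun j => v.1 (et j), fun j => v.2.1 (ec j), fun j => v.2.2 (er j))
      left_inv := by intro v; simp
      right_inv := by intro v; simp
      map_add' := by intro v w; rfl }
  have key : ∀ x, e1 (e0 (σ x)) =
      ((e1 (e0 x)).1, -(e1 (e0 x)).2.1, fun i => ((e1 (e0 x)).2.2 i).swap) := by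
    intro x
    refine Prod.ext ?_ (Prod.ext ?_ ?_)
    · funext j
      rcases j with j | ⟨i, h⟩
      · simp [e1, h2]
      · have : a i = 2 * (a i / 2) := by omega
        simp only [e1, AddEquiv.coe_mk, Equiv.coe_fn_mk, Sum.elim_inr, h1, h4]
        generalize a i / 2 = b at *
        rw [this]; ring
    · funext j
      rcases j with j | i
      · simp [e1, h3]
      · simp [e1, h4]
    · funext i
      obtain ⟨i, h⟩ := i
      have : a i = 2 * (a i / 2) + 1 := by omega
      simp only [e1, AddEquiv.coe_mk, Equiv.coe_fn_mk, h1, h4]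
      generalize a i / 2 = b at *
      rw [this]
      refine Prod.ext ?_ ?_
      · simp; ring
      · simp; ring
  refine ⟨t, c, r, (e0.trans e1).trans e2, fun x => ?_⟩
  simp only [AddEquiv.trans_apply, key]
  rfl

/-- Splitting of a surjection onto a projective module, in coordinates. -/
theorem split_aux {M P : Type*} [AddCommGroup M] [AddCommGroup P]
    [Module.Projective ℤ P] (f : M →ₗ[ℤ] P) (hf : Function.Surjective f) :
    ∃ (s : P →ₗ[ℤ] M) (e : M ≃ₗ[ℤ] (LinearMap.ker f × P)),
      (∀ p, f (s p) = p) ∧ ∀ x, (e x).2 = f x ∧ ((e x).1 : M) = x - s (f x) := by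
  obtain ⟨s, hs⟩ := Module.projective_lifting_property f LinearMap.id hf
  have hs' : ∀ p, f (s p) = p := fun p => LinearMap.congr_fun hs p
  let g : M →ₗ[ℤ] LinearMap.ker f :=
    LinearMap.codRestrict _ (LinearMap.id - s ∘ₗ f) (by intro x; simp [hs'])
  refine ⟨s, LinearEquiv.ofBijective (g.prod f) ⟨?_, ?_⟩, hs', ?_⟩
  · rw [injective_iff_map_eq_zero]
    intro x hx
    have h2 : f x = 0 := congrArg Prod.snd hx
    have h1 : x - s (f x) = 0 := congrArg (fun y => (y.1 : M)) hx
    simpa [h2] using h1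
  · rintro ⟨⟨k, hk⟩, p⟩
    have hk' : f k = 0 := hk
    refine ⟨k + s p, Prod.ext (Subtype.ext ?_) ?_⟩
    · simp [g, hs', hk']
    · simp [hs', hk']
  · intro x
    exact ⟨rfl, rfl⟩


set_option maxHeartbeats 1000000 in
/-- Every finitely generated free abelian group `Λ` equipped with an
involution `σ` decomposes as a direct sum of `ℤ/2`-submodules of three indecomposable
types: the trivial module `ℤ` (σ = id), the sign module `ℤ₋` (σ = -id), and the
regular module `R = ℤ²` with `σ (x, y) = (y, x)`.  Concretely: there exist `t c r : ℕ`
and an additive isomorphism `e : Λ ≃+ (Fin t → ℤ) × (Fin c → ℤ) × (Fin r → ℤ × ℤ)`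
intertwining `σ` with the model involution which is the identity on the first factor,
negation on the second, and coordinate swap on each `ℤ × ℤ` summand of the third. -/
theorem stmt1 (Λ : Type*) [AddCommGroup Λ] [Module.Free ℤ Λ] [Module.Finite ℤ Λ]
    (σ : Λ →+ Λ) (hσ : ∀ x, σ (σ x) = x) :
    ∃ (t c r : ℕ) (e : Λ ≃+ ((Fin t → ℤ) × (Fin c → ℤ) × (Fin r → ℤ × ℤ))),
      ∀ x : Λ, e (σ x) = ((e x).1, -(e x).2.1, fun i => ((e x).2.2 i).swap) := by

  classical
  let S : Λ →ₗ[ℤ] Λ := σ.toIntLinearMap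
  have hS : ∀ x, S x = σ x := fun _ => rfl
  let D0 : Λ →ₗ[ℤ] Λ := S - LinearMap.id
  have hD0 : ∀ x, D0 x = σ x - x := fun _ => rfl
  let D := D0.rangeRestrict
  have hD : ∀ x, (D x : Λ) = σ x - x := fun _ => rfl
  obtain ⟨s, e1, hs, he1⟩ := split_aux D D0.surjective_rangeRestrict
  have hK : ∀ x, x ∈ LinearMap.ker D ↔ σ x = x := by
    intro x
    rw [LinearMap.mem_ker, ← Subtype.coe_inj, hD]
    simp [sub_eq_zero]
  let φ : LinearMap.range D0 →ₗ[ℤ] LinearMap.ker D :=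
    LinearMap.codRestrict _ (s + S ∘ₗ s) (by
      intro l
      rw [hK]
      simp [hS, hσ, add_comm])
  have hφ : ∀ l, (φ l : Λ) = s l + σ (s l) := fun _ => rfl
  obtain ⟨s', e2, hs', he2⟩ := split_aux φ.rangeRestrict φ.surjective_rangeRestrict
  obtain ⟨n, snf⟩ := Submodule.smithNormalForm
    (Module.finBasis ℤ (LinearMap.ker D)) (LinearMap.range φ)
  let bZ := Module.finBasis ℤ (LinearMap.ker φ.rangeRestrict)
  let f := snf.f
  let rr : (Fin n ⊕ ((Set.range f)ᶜ : Set _)) ≃ _ :=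
    ((Equiv.ofInjective f f.injective).sumCongr (Equiv.refl _)).trans
      (Equiv.Set.sumCompl (Set.range f))
  let bK := snf.bM.reindex rr.symm
  let e3 := e1.trans ((LinearEquiv.refl ℤ _).prodCongr e2)
  let e4 := e3.trans (bK.equivFun.prodCongr (bZ.equivFun.prodCongr snf.bN.equivFun))
  have c1 : ∀ x, ((e1 (σ x)).1) = (e1 x).1 + φ (D x) := by
    intro x
    apply Subtype.ext
    have hn : D (σ x) = - D x := by
      apply Subtype.ext
      simp [hD, hσ]
    have hk := (hK _).1 (e1 x).1.2
    rw [(he1 x).2, map_sub] at hk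
    rw [(he1 _).2, Submodule.coe_add, (he1 x).2, hφ, hn, map_neg]
    rw [sub_eq_iff_eq_add] at hk
    rw [hk]; abel
  have c2 : ∀ x, (e1 (σ x)).2 = - (e1 x).2 := by
    intro x
    rw [(he1 _).1, (he1 _).1]
    apply Subtype.ext
    simp [hD, hσ]
  have d1 : ∀ x, (e4 x).1 = bK.equivFun (e1 x).1 := fun _ => rfl
  have d2 : ∀ x, (e4 x).2.1 = bZ.equivFun (e2 (e1 x).2).1 := fun _ => rfl
  have d3 : ∀ x, (e4 x).2.2 = snf.bN.equivFun (e2 (e1 x).2).2 := fun _ => rfl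
  have d3' : ∀ x, (e4 x).2.2 = snf.bN.equivFun (φ.rangeRestrict (D x)) := by
    intro x; rw [d3, (he2 _).1, (he1 _).1]
  have hb : ∀ (y : LinearMap.ker D) j, bK.equivFun y j = snf.bM.repr y (rr j) := by
    intro y j
    rw [Module.Basis.equivFun_apply, Module.Basis.repr_reindex_apply, Equiv.symm_symm]
  have r1 : ∀ (y : LinearMap.range φ) i,
      bK.equivFun (y : LinearMap.ker D) (Sum.inl i) = snf.a i * snf.bN.equivFun y i := by
    intro y i
    have := snf.repr_apply_embedding_eq_repr_smul (m := y) (i := i)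
    rw [hb]
    change snf.bM.repr _ (snf.f i) = _
    rw [this]
    simp
  have r2 : ∀ (y : LinearMap.range φ) j,
      bK.equivFun (y : LinearMap.ker D) (Sum.inr j) = 0 := by
    intro y j
    have := snf.repr_eq_zero_of_notMem_range y (i := j.1) j.2
    rw [hb]
    exact this
  refine core_aux σ snf.a e4.toAddEquiv ?_ ?_ ?_ ?_
  · intro x i
    change (e4 (σ x)).1 _ = (e4 x).1 _ + _ * (e4 x).2.2 i
    rw [d1, d1, c1, d3', map_add, Pi.add_apply, ← r1]
    rfl
  · intro x i
    change (e4 (σ x)).1 _ = (e4 x).1 _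
    rw [d1, d1, c1, map_add, Pi.add_apply]
    have := r2 (φ.rangeRestrict (D x)) i
    change bK.equivFun (φ (D x)) _ = 0 at this
    rw [this, add_zero]
  · intro x i
    change (e4 (σ x)).2.1 i = - (e4 x).2.1 i
    rw [d2, d2, c2, map_neg, Prod.fst_neg, map_neg, Pi.neg_apply]
  · intro x i
    change (e4 (σ x)).2.2 i = - (e4 x).2.2 i
    rw [d3, d3, c2, map_neg, Prod.snd_neg, map_neg, Pi.neg_apply]
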